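/- arXiv:2011.07877 — 3 statements merged into one kernel-verified Lean document; each statement's English description precedes it below -/
import Mathlib

section
/- Let n ≥ 1 be an integer and let q, α, β, γ, z ∈ ℂ be nonzero. Assume q^j ≠ 1 for all integers 1 ≤ j ≤ n, and assume βγ ≠ q^i and αγ ≠ q^i for all integers i with 1−n ≤ i ≤ 0. Then ∑_{m=0}^{n} α^{−m} β^{−m} q^{−mn} · (q^{n+1−m}, q^{1−m}/(γz), q^{1−m} z/γ ; q)_m / (q^{−m}, q^{1−m}/(βγ), q^{1−m}/(αγ) ; q)_m = ∑_{m=0}^{n} [(q^{−n};q)_m (γz;q)_m (γ z^{−1};q)_m / ((q;q)_m (βγ;q)_m (αγ;q)_m)] · q^{m}. -/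
/-- The `q`-Pochhammer symbol `(a;q)_m = ∏_{j=0}^{m-1} (1 - a q^j)`. -/
noncomputable def qPoch (a q : ℂ) (m : ℕ) : ℂ := ∏ j ∈ Finset.range m, (1 - a * q ^ j)

/-- Reversal of a `q`-Pochhammer symbol. -/
theorem qPoch_rev (a q : ℂ) (ha : a ≠ 0) (hq : q ≠ 0) (m : ℕ) :
    qPoch (q ^ (1 - (m : ℤ)) / a) q m
      = (-a⁻¹) ^ m * (∏ j ∈ Finset.range m, q ^ j)⁻¹ * qPoch a q m := by
  unfold qPoch
  rw [← Finset.prod_range_reflect, ← Finset.prod_inv_distrib]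
  have h : (-a⁻¹) ^ m = ∏ _j ∈ Finset.range m, (-a⁻¹) := by simp
  rw [h, ← Finset.prod_mul_distrib, ← Finset.prod_mul_distrib]
  refine Finset.prod_congr rfl fun j hj => ?_
  have hj' : j < m := Finset.mem_range.mp hj
  have e : q ^ (1 - (m : ℤ)) * q ^ (m - 1 - j) = (q ^ j)⁻¹ := by
    rw [← zpow_natCast q (m - 1 - j), ← zpow_add₀ hq, ← zpow_natCast q j, ← zpow_neg]
    congr 1
    omega
  have e2 : q ^ (1 - (m : ℤ)) / a * q ^ (m - 1 - j) = (q ^ j)⁻¹ / a := by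
    rw [← e]; ring
  rw [e2]
  have : q ^ j ≠ 0 := pow_ne_zero _ hq
  field_simp
  ring

/-- Case `k = 2` of Lemma 5.2 of the paper:
`Σ_{n,2} = ₃φ₂(q^{−n}, γz, γz^{−1}; βγ, αγ; q; q)` as terminating sums. -/
theorem stmt2 (n : ℕ) (hn : 1 ≤ n) (q α β γ z : ℂ)
    (hq : q ≠ 0) (hα : α ≠ 0) (hβ : β ≠ 0) (hγ : γ ≠ 0) (hz : z ≠ 0)
    (hq1 : ∀ j : ℕ, 1 ≤ j → j ≤ n → q ^ j ≠ 1)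
    (hβγ : ∀ i : ℤ, 1 - (n : ℤ) ≤ i → i ≤ 0 → β * γ ≠ q ^ i)
    (hαγ : ∀ i : ℤ, 1 - (n : ℤ) ≤ i → i ≤ 0 → α * γ ≠ q ^ i) :
    ∑ m ∈ Finset.range (n + 1),
        α ^ (-(m : ℤ)) * β ^ (-(m : ℤ)) * q ^ (-((m : ℤ) * (n : ℤ))) *
          (qPoch (q ^ ((n : ℤ) + 1 - (m : ℤ))) q m *
            qPoch (q ^ (1 - (m : ℤ)) / (γ * z)) q m *
            qPoch (q ^ (1 - (m : ℤ)) * z / γ) q m) /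
          (qPoch (q ^ (-(m : ℤ))) q m * qPoch (q ^ (1 - (m : ℤ)) / (β * γ)) q m *
            qPoch (q ^ (1 - (m : ℤ)) / (α * γ)) q m)
      = ∑ m ∈ Finset.range (n + 1),
          (qPoch (q ^ (-(n : ℤ))) q m * qPoch (γ * z) q m * qPoch (γ * z⁻¹) q m) /
            (qPoch q q m * qPoch (β * γ) q m * qPoch (α * γ) q m) * q ^ m := by
  refine Finset.sum_congr rfl fun m _ => ?_
  have h1 : q ^ ((n : ℤ) + 1 - (m : ℤ)) = q ^ (1 - (m : ℤ)) / q ^ (-(n : ℤ)) := by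
    rw [← zpow_sub₀ hq]; congr 1; ring
  have h2 : q ^ (-(m : ℤ)) = q ^ (1 - (m : ℤ)) / q := by
    rw [div_eq_mul_inv, ← zpow_sub_one₀ hq]; congr 1; ring
  have h3 : q ^ (1 - (m : ℤ)) * z / γ = q ^ (1 - (m : ℤ)) / (γ * z⁻¹) := by
    field_simp
  rw [h1, h2, h3, qPoch_rev _ q (zpow_ne_zero _ hq) hq, qPoch_rev _ q (mul_ne_zero hγ hz) hq,
    qPoch_rev _ q (mul_ne_zero hγ (inv_ne_zero hz)) hq, qPoch_rev _ q hq hq,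
    qPoch_rev _ q (mul_ne_zero hβ hγ) hq, qPoch_rev _ q (mul_ne_zero hα hγ) hq]
  have hK : (∏ j ∈ Finset.range m, q ^ j) ≠ 0 :=
    Finset.prod_ne_zero_iff.mpr fun j _ => pow_ne_zero _ hq
  generalize (∏ j ∈ Finset.range m, q ^ j) = K at hK ⊢
  generalize qPoch (q ^ (-(n : ℤ))) q m = A
  generalize qPoch (γ * z) q m = B
  generalize qPoch (γ * z⁻¹) q m = C
  generalize qPoch q q m = D
  generalize qPoch (β * γ) q m = E
  generalize qPoch (α * γ) q m = F
  have h4 : q ^ (-((m : ℤ) * (n : ℤ))) = ((q ^ n) ^ m)⁻¹ := by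
    rw [zpow_neg, ← pow_mul, ← zpow_natCast q (n * m)]; push_cast; rw [mul_comm]
  have h5 : (q ^ (-(n : ℤ)))⁻¹ = q ^ n := by simp
  rw [h4, h5, zpow_neg, zpow_neg, zpow_natCast, zpow_natCast]
  have hQ : q ^ n ≠ 0 := pow_ne_zero _ hq
  generalize q ^ n = Q at hQ ⊢
  have key : (α ^ m)⁻¹ * (β ^ m)⁻¹ * (Q ^ m)⁻¹ *
      (((-Q) ^ m * K⁻¹) * ((-(γ * z)⁻¹) ^ m * K⁻¹) * ((-(γ * z⁻¹)⁻¹) ^ m * K⁻¹)) =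
      q ^ m * (((-q⁻¹) ^ m * K⁻¹) * ((-(β * γ)⁻¹) ^ m * K⁻¹) * ((-(α * γ)⁻¹) ^ m * K⁻¹)) := by
    have h : α⁻¹ * β⁻¹ * Q⁻¹ * ((-Q) * (-(γ * z)⁻¹) * (-(γ * z⁻¹)⁻¹)) =
        q * ((-q⁻¹) * (-(β * γ)⁻¹) * (-(α * γ)⁻¹)) := by
      field_simp
    have h' := congrArg (fun t => t ^ m * (K⁻¹) ^ 3) h
    simp only [mul_pow, inv_pow] at h' ⊢
    linear_combination h'
  have hne : ((-q⁻¹) ^ m * K⁻¹) * ((-(β * γ)⁻¹) ^ m * K⁻¹) * ((-(α * γ)⁻¹) ^ m * K⁻¹) ≠ 0 := by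
    have a1 : (-q⁻¹) ≠ 0 := by simpa using hq
    have a2 : (-(β * γ)⁻¹) ≠ 0 := neg_ne_zero.mpr (inv_ne_zero (mul_ne_zero hβ hγ))
    have a3 : (-(α * γ)⁻¹) ≠ 0 := neg_ne_zero.mpr (inv_ne_zero (mul_ne_zero hα hγ))
    have a4 := inv_ne_zero hK
    exact mul_ne_zero (mul_ne_zero (mul_ne_zero (pow_ne_zero _ a1) a4)
      (mul_ne_zero (pow_ne_zero _ a2) a4)) (mul_ne_zero (pow_ne_zero _ a3) a4)
  generalize (-q⁻¹) ^ m * K⁻¹ = X at *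
  generalize (-(β * γ)⁻¹) ^ m * K⁻¹ = Y at *
  generalize (-(α * γ)⁻¹) ^ m * K⁻¹ = Z at *
  generalize (-Q) ^ m * K⁻¹ = U at *
  generalize (-(γ * z)⁻¹) ^ m * K⁻¹ = V at *
  generalize (-(γ * z⁻¹)⁻¹) ^ m * K⁻¹ = W at *
  calc _ = ((α ^ m)⁻¹ * (β ^ m)⁻¹ * (Q ^ m)⁻¹ * (U * V * W)) * (A * B * C) /
        ((X * Y * Z) * (D * E * F)) := by congr 1 <;> ring
    _ = (X * Y * Z) * (q ^ m * (A * B * C)) / ((X * Y * Z) * (D * E * F)) := by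
        rw [key]; congr 1; ring
    _ = _ := by rw [mul_div_mul_left _ _ hne]; ring
end

section
/- Let n ≥ 0 be an integer and let q, α, β, γ, z ∈ ℂ be nonzero. Assume q^j ≠ 1 for all integers 1 ≤ j ≤ n, and assume αβ ≠ q^{−i}, αγ ≠ q^{−i} and βγ ≠ q^{−i} for all integers 0 ≤ i ≤ n−1. Then [α^{n} (βγ;q)_n / (γ^{n} (αβ;q)_n)] · ∑_{m=0}^{n} [(q^{−n};q)_m (γz;q)_m (γz^{−1};q)_m / ((q;q)_m (βγ;q)_m (αγ;q)_m)] · q^{m} = ∑_{m=0}^{n} [(q^{−n};q)_m (αz;q)_m (αz^{−1};q)_m / ((q;q)_m (αβ;q)_m (αγ;q)_m)] · q^{m}. -/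
lemma qPoch_succ_aux (a q : ℂ) (m : ℕ) : qPoch a q (m+1) = qPoch a q m * (1 - a * q ^ m) := by
  simp [qPoch, Finset.prod_range_succ]

lemma qPoch_shift_aux (a q : ℂ) (m : ℕ) : qPoch a q (m+1) = (1 - a) * qPoch (a * q) q m := by
  unfold qPoch
  rw [Finset.prod_range_succ', mul_comm]
  congr 1
  · simp
  · apply Finset.prod_congr rfl
    intro j _
    ring

lemma qPoch_ne_aux (a q : ℂ) (m : ℕ) (h : ∀ j < m, 1 - a * q ^ j ≠ 0) : qPoch a q m ≠ 0 := by
  unfold qPoch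
  rw [Finset.prod_ne_zero_iff]
  intro j hj
  exact h j (Finset.mem_range.mp hj)

lemma qPoch_vanish_aux (q : ℂ) (hq : q ≠ 0) (n m : ℕ) (h : n < m) :
    qPoch (q ^ (-(n : ℤ))) q m = 0 := by
  unfold qPoch
  apply Finset.prod_eq_zero (Finset.mem_range.mpr h)
  rw [zpow_neg, zpow_natCast, inv_mul_cancel₀ (pow_ne_zero _ hq), sub_self]

/-- coefficient of the series -/
noncomputable def cf (q s t : ℂ) (y : ℂ) (m : ℕ) : ℂ :=
  qPoch y q m / (qPoch q q m * qPoch s q m * qPoch t q m) * q ^ m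

/-- the basis -/
noncomputable def uu (q a z : ℂ) (m : ℕ) : ℂ := qPoch (a * z) q m * qPoch (a * z⁻¹) q m

/-- the series -/
noncomputable def FF (q a b c z : ℂ) (n : ℕ) : ℂ :=
  ∑ m ∈ Finset.range (n + 1), cf q (a * b) (a * c) (q ^ (-(n : ℤ))) m * uu q a z m

lemma FF_ext (q a b c z : ℂ) (hq : q ≠ 0) (n N : ℕ) (h : n + 1 ≤ N) :
    FF q a b c z n =
      ∑ m ∈ Finset.range N, cf q (a * b) (a * c) (q ^ (-(n : ℤ))) m * uu q a z m := by
  unfold FF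
  apply Finset.sum_subset
  · intro x hx
    simp only [Finset.mem_range] at *
    omega
  · intro x _ hx
    simp only [Finset.mem_range] at *
    rw [cf, qPoch_vanish_aux q hq n x (by omega), zero_div, zero_mul, zero_mul]

lemma cf_rec (q a b c y : ℂ) (m : ℕ) (hq : q ≠ 0) (hy : y ≠ 0)
    (h1 : ∀ j < m + 1, 1 - q * q ^ j ≠ 0)
    (h2 : ∀ j < m + 1, 1 - a * b * q ^ j ≠ 0)
    (h3 : ∀ j < m + 1, 1 - a * c * q ^ j ≠ 0) :
    -((q ^ m)⁻¹ * cf q (a*b) (a*c) y m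
        + (1 - (q ^ (m+1))⁻¹) * (1 - a^2 * q^(m+1)) * cf q (a*b) (a*c) y (m+1))
      = (1 - a*b*y⁻¹) * (1 - a*c*y⁻¹) * (cf q (a*b) (a*c) (y * q⁻¹) (m+1)
            - cf q (a*b) (a*c) y (m+1))
        + a^2 * (1 - y⁻¹) * (1 - b*c*(y⁻¹*q⁻¹)) * (cf q (a*b) (a*c) (y*q) (m+1)
            - cf q (a*b) (a*c) y (m+1)) := by
  have e1 : qPoch y q (m+1) = qPoch y q m * (1 - y * q ^ m) := qPoch_succ_aux _ _ _
  have e2 : qPoch (y * q⁻¹) q (m+1) = (1 - y * q⁻¹) * qPoch y q m := by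
    rw [qPoch_shift_aux, inv_mul_cancel_right₀ hq]
  have e3 : (1 - y⁻¹) * qPoch (y*q) q (m+1)
      = -y⁻¹ * (qPoch y q m * (1 - y * q ^ m) * (1 - y * q^(m+1))) := by
    rw [← e1, ← qPoch_succ_aux y q (m+1), qPoch_shift_aux y q (m+1)]
    field_simp
    ring
  have n1 := qPoch_ne_aux q q m (fun j hj => h1 j (by omega))
  have n2 := qPoch_ne_aux (a*b) q m (fun j hj => h2 j (by omega))
  have n3 := qPoch_ne_aux (a*c) q m (fun j hj => h3 j (by omega))
  have m1 := h1 m (by omega)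
  have m2 := h2 m (by omega)
  have m3 := h3 m (by omega)
  have e4 : a^2 * (1 - y⁻¹) * (1 - b*c*(y⁻¹*q⁻¹)) * (cf q (a*b) (a*c) (y*q) (m+1)
            - cf q (a*b) (a*c) y (m+1)) = a^2 * (1 - b*c*(y⁻¹*q⁻¹)) *
      ((-y⁻¹ * (qPoch y q m * (1 - y * q ^ m) * (1 - y * q^(m+1)))
        - (1 - y⁻¹) * (qPoch y q m * (1 - y * q ^ m)))
        / (qPoch q q (m+1) * qPoch (a*b) q (m+1) * qPoch (a*c) q (m+1)) * q ^ (m+1)) := by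
    rw [← e3, ← e1]; unfold cf; ring
  rw [e4]
  unfold cf
  rw [e1, e2, qPoch_succ_aux q, qPoch_succ_aux (a*b), qPoch_succ_aux (a*c)]
  generalize qPoch y q m = W at *
  generalize qPoch q q m = D1 at *
  generalize qPoch (a*b) q m = D2 at *
  generalize qPoch (a*c) q m = D3 at *
  have hX : q ^ m ≠ 0 := pow_ne_zero _ hq
  rw [pow_succ q m]
  generalize q ^ m = X at *
  clear e1 e2 e3 e4 h1 h2 h3
  obtain ⟨E1, he1⟩ : ∃ E, E = 1 - q * X := ⟨_, rfl⟩
  obtain ⟨E2, he2⟩ : ∃ E, E = 1 - a * b * X := ⟨_, rfl⟩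
  obtain ⟨E3, he3⟩ : ∃ E, E = 1 - a * c * X := ⟨_, rfl⟩
  rw [← he1] at m1 ⊢
  rw [← he2] at m2 ⊢
  rw [← he3] at m3 ⊢
  field_simp
  rw [he1, he2, he3]
  ring

lemma uu_rec (q a z : ℂ) (hq : q ≠ 0) (hz : z ≠ 0) (m : ℕ) :
    (1 - a*z) * (1 - a*z⁻¹) * uu q a z m
      = (q^m)⁻¹ * uu q a z (m+1) + (1 - (q^m)⁻¹) * (1 - a^2 * q^m) * uu q a z m := by
  unfold uu
  rw [qPoch_succ_aux, qPoch_succ_aux]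
  have hX : q ^ m ≠ 0 := pow_ne_zero _ hq
  field_simp
  ring

lemma FF_rec (q a b c z : ℂ) (n : ℕ) (hq : q ≠ 0) (hz : z ≠ 0)
    (h1 : ∀ j < n + 2, 1 - q * q ^ j ≠ 0)
    (h2 : ∀ j < n + 2, 1 - a * b * q ^ j ≠ 0)
    (h3 : ∀ j < n + 2, 1 - a * c * q ^ j ≠ 0) :
    -((1 - a*z) * (1 - a*z⁻¹) * FF q a b c z (n+1))
      = (1 - a*b*q^(n+1)) * (1 - a*c*q^(n+1)) * (FF q a b c z (n+2) - FF q a b c z (n+1))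
        + a^2 * (1 - q^(n+1)) * (1 - b*c*q^n) * (FF q a b c z n - FF q a b c z (n+1)) := by
  rw [FF_ext q a b c z hq n (n+3) (by omega), FF_ext q a b c z hq (n+1) (n+3) (by omega),
    FF_ext q a b c z hq (n+2) (n+3) (by omega)]
  obtain ⟨y, hy⟩ : ∃ y, y = q ^ (-((n+1 : ℕ) : ℤ)) := ⟨_, rfl⟩
  have hy0 : y ≠ 0 := by rw [hy]; exact zpow_ne_zero _ hq
  have hyi : q^(n+1) = y⁻¹ := by rw [hy, zpow_neg, inv_inv, zpow_natCast]
  have hyn : q^n = y⁻¹ * q⁻¹ := by rw [← hyi, pow_succ]; field_simp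
  have y2 : q ^ (-((n+2 : ℕ) : ℤ)) = y * q⁻¹ := by
    rw [hy, ← zpow_sub_one₀ hq]; congr 1
  have y0 : q ^ (-(n : ℤ)) = y * q := by
    rw [hy, ← zpow_add_one₀ hq]; congr 1; push_cast; omega
  have hv : cf q (a*b) (a*c) y (n+2) = 0 := by
    rw [cf, hy, qPoch_vanish_aux q hq (n+1) (n+2) (by omega), zero_div, zero_mul]
  rw [y2, y0, ← hy, hyi, hyn]
  have L : (1 - a*z) * (1 - a*z⁻¹) * ∑ m ∈ Finset.range (n+3), cf q (a*b) (a*c) y m * uu q a z m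
      = ∑ m ∈ Finset.range (n+2), ((q ^ m)⁻¹ * cf q (a*b) (a*c) y m
        + (1 - (q ^ (m+1))⁻¹) * (1 - a^2 * q^(m+1)) * cf q (a*b) (a*c) y (m+1))
          * uu q a z (m+1) := by
    have s1 : (1 - a*z) * (1 - a*z⁻¹) * ∑ m ∈ Finset.range (n+3),
        cf q (a*b) (a*c) y m * uu q a z m
        = ∑ m ∈ Finset.range (n+3), (q^m)⁻¹ * cf q (a*b) (a*c) y m * uu q a z (m+1)
        + ∑ m ∈ Finset.range (n+3), (1 - (q^m)⁻¹) * (1 - a^2 * q^m) *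
          cf q (a*b) (a*c) y m * uu q a z m := by
      rw [Finset.mul_sum, ← Finset.sum_add_distrib]
      apply Finset.sum_congr rfl
      intro m _
      linear_combination cf q (a*b) (a*c) y m * uu_rec q a z hq hz m
    rw [s1, Finset.sum_range_succ, hv, Finset.sum_range_succ' _ (n+2)]
    simp only [pow_zero, inv_one, sub_self, zero_mul, mul_zero, add_zero]
    rw [← Finset.sum_add_distrib]
    apply Finset.sum_congr rfl
    intro m _
    ring
  rw [L, ← Finset.sum_sub_distrib, ← Finset.sum_sub_distrib, Finset.mul_sum, Finset.mul_sum,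
    ← Finset.sum_add_distrib, Finset.sum_range_succ' _ (n+2), ← Finset.sum_neg_distrib]
  have z0 : ∀ w, cf q (a*b) (a*c) w 0 = 1 := by intro w; simp [cf, qPoch]
  simp only [z0, sub_self, mul_zero, add_zero]
  apply Finset.sum_congr rfl
  intro m hm
  have hm' := Finset.mem_range.mp hm
  have := cf_rec q a b c y m hq hy0 (fun j hj => h1 j (by omega)) (fun j hj => h2 j (by omega))
    (fun j hj => h3 j (by omega))
  linear_combination uu q a z (m+1) * this

/-- normalised series -/
noncomputable def HH (q a b c z : ℂ) (n : ℕ) : ℂ := c ^ n * qPoch (a * b) q n * FF q a b c z n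

lemma HH_rec (q a b c z : ℂ) (n : ℕ) (hq : q ≠ 0) (hz : z ≠ 0)
    (h1 : ∀ j < n + 2, 1 - q * q ^ j ≠ 0)
    (h2 : ∀ j < n + 2, 1 - a * b * q ^ j ≠ 0)
    (h3 : ∀ j < n + 2, 1 - a * c * q ^ j ≠ 0) :
    (1 - a*c*q^(n+1)) * HH q a b c z (n+2)
      = c * ((1 - a*b*q^(n+1)) * (1 - a*c*q^(n+1)) + a^2 * (1 - q^(n+1)) * (1 - b*c*q^n)
          - (1 - a*z) * (1 - a*z⁻¹)) * HH q a b c z (n+1)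
        - a^2 * c^2 * (1 - q^(n+1)) * (1 - b*c*q^n) * (1 - a*b*q^n) * HH q a b c z n := by
  have := FF_rec q a b c z n hq hz h1 h2 h3
  unfold HH
  rw [qPoch_succ_aux (a*b) q (n+1), qPoch_succ_aux (a*b) q n]
  linear_combination (-(c^(n+2) * qPoch (a*b) q n * (1 - a*b*q^n))) * this

lemma HH_symm (q a b c z : ℂ) (hq : q ≠ 0) (hz : z ≠ 0) (n : ℕ) :
    (∀ j < n, 1 - q * q ^ j ≠ 0) → (∀ j < n, 1 - a * b * q ^ j ≠ 0) →
    (∀ j < n, 1 - a * c * q ^ j ≠ 0) → (∀ j < n, 1 - b * c * q ^ j ≠ 0) →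
    HH q c b a z n = HH q a b c z n := by
  induction n using Nat.strong_induction_on with
  | _ n ih =>
    intro h1 h2 h3 h4
    match n, ih, h1, h2, h3, h4 with
    | 0, _, _, _, _, _ => simp [HH, FF, cf, uu, qPoch]
    | 1, _, h1, h2, h3, h4 =>
      have k1 := h1 0 (by omega)
      have k2 := h2 0 (by omega)
      have k3 := h3 0 (by omega)
      have k4 := h4 0 (by omega)
      simp only [pow_zero, mul_one] at k1 k2 k3 k4
      have k5 : 1 - c * a ≠ 0 := by rwa [mul_comm]
      have k6 : 1 - c * b ≠ 0 := by rwa [mul_comm]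
      simp only [HH, FF, cf, uu, qPoch, Finset.sum_range_succ, Finset.prod_range_succ,
        Finset.sum_range_zero, Finset.prod_range_zero, pow_zero, pow_one, mul_one, one_mul,
        zero_add, div_one, Nat.cast_one, zpow_neg, zpow_one]
      rw [mul_comm c a, mul_comm c b]
      field_simp
      ring
    | n+2, ih, h1, h2, h3, h4 =>
      have i0 := ih n (by omega) (fun j hj => h1 j (by omega)) (fun j hj => h2 j (by omega))
        (fun j hj => h3 j (by omega)) (fun j hj => h4 j (by omega))
      have i1 := ih (n+1) (by omega) (fun j hj => h1 j (by omega)) (fun j hj => h2 j (by omega))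
        (fun j hj => h3 j (by omega)) (fun j hj => h4 j (by omega))
      have r1 := HH_rec q a b c z n hq hz h1 h2 h3
      have r2 := HH_rec q c b a z n hq hz h1 (by simpa only [mul_comm c b] using h4)
        (by simpa only [mul_comm c a] using h3)
      rw [i0, i1] at r2
      apply mul_left_cancel₀ (h3 (n+1) (by omega))
      rw [r1, ← mul_comm c a, r2]
      field_simp
      ring

/-- Equation (5.37) in the proof of Theorem 5.3 of the paper: a parameter-exchange symmetry
of the terminating continuous dual `q`-Hahn series. -/
theorem stmt7 (n : ℕ) (q α β γ z : ℂ)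
    (hq : q ≠ 0) (hα : α ≠ 0) (hβ : β ≠ 0) (hγ : γ ≠ 0) (hz : z ≠ 0)
    (hq1 : ∀ j : ℕ, 1 ≤ j → j ≤ n → q ^ j ≠ 1)
    (hαβ : ∀ i : ℕ, i < n → α * β ≠ q ^ (-(i : ℤ)))
    (hαγ : ∀ i : ℕ, i < n → α * γ ≠ q ^ (-(i : ℤ)))
    (hβγ : ∀ i : ℕ, i < n → β * γ ≠ q ^ (-(i : ℤ))) :
    α ^ n * qPoch (β * γ) q n / (γ ^ n * qPoch (α * β) q n) *
        ∑ m ∈ Finset.range (n + 1),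
          (qPoch (q ^ (-(n : ℤ))) q m * qPoch (γ * z) q m * qPoch (γ * z⁻¹) q m) /
            (qPoch q q m * qPoch (β * γ) q m * qPoch (α * γ) q m) * q ^ m
      = ∑ m ∈ Finset.range (n + 1),
          (qPoch (q ^ (-(n : ℤ))) q m * qPoch (α * z) q m * qPoch (α * z⁻¹) q m) /
            (qPoch q q m * qPoch (α * β) q m * qPoch (α * γ) q m) * q ^ m := by
  have key : ∀ x : ℂ, (∀ i : ℕ, i < n → x ≠ q ^ (-(i : ℤ))) → ∀ j < n, 1 - x * q ^ j ≠ 0 := by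
    intro x hx j hj h0
    apply hx j hj
    rw [zpow_neg, zpow_natCast]
    exact eq_inv_of_mul_eq_one_left (sub_eq_zero.mp h0).symm
  have k1 : ∀ j < n, 1 - q * q ^ j ≠ 0 := by
    intro j hj h0
    apply hq1 (j+1) (by omega) (by omega)
    rw [pow_succ, mul_comm]
    exact (sub_eq_zero.mp h0).symm
  have k2 := key _ hαβ
  have k3 := key _ hαγ
  have k4 := key _ hβγ
  have main := HH_symm q α β γ z hq hz n k1 k2 k3 k4
  have nz := qPoch_ne_aux _ q n k2
  have e1 : ∑ m ∈ Finset.range (n + 1),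
          (qPoch (q ^ (-(n : ℤ))) q m * qPoch (γ * z) q m * qPoch (γ * z⁻¹) q m) /
            (qPoch q q m * qPoch (β * γ) q m * qPoch (α * γ) q m) * q ^ m
      = FF q γ β α z n := by
    unfold FF cf uu
    apply Finset.sum_congr rfl
    intro m _
    rw [mul_comm γ β, mul_comm γ α]
    ring
  have e2 : ∑ m ∈ Finset.range (n + 1),
          (qPoch (q ^ (-(n : ℤ))) q m * qPoch (α * z) q m * qPoch (α * z⁻¹) q m) /
            (qPoch q q m * qPoch (α * β) q m * qPoch (α * γ) q m) * q ^ m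
      = FF q α β γ z n := by
    unfold FF cf uu
    apply Finset.sum_congr rfl
    intro m _
    ring
  rw [e1, e2]
  unfold HH at main
  rw [mul_comm γ β] at main
  rw [div_mul_eq_mul_div, div_eq_iff (mul_ne_zero (pow_ne_zero _ hγ) nz), main]
  ring
end

section
/- Let n ≥ 1 be an integer and let q, α, β, γ, z ∈ ℂ be nonzero. Assume q^j ≠ 1 for all integers 1 ≤ j ≤ n, and assume αβ ≠ q^{i}, αγ ≠ q^{i} and βγ ≠ q^{i} for all integers i with 1−n ≤ i ≤ n−1. Define Σ_{n,1} = ∑_{m=0}^{n} q^{−m} (q^{n+1−m}, q^{1−m}/(γz), q^{1−m}z/γ ; q)_m / (q^{−m}, q^{1−m}/(βγ), q^{1−m}/(αγ) ; q)_m and Σ_{n,2} = ∑_{m=0}^{n} α^{−m}β^{−m}q^{−mn} (q^{n+1−m}, q^{1−m}/(γz), q^{1−m}z/γ ; q)_m / (q^{−m}, q^{1−m}/(βγ), q^{1−m}/(αγ) ; q)_m. Then [(γβ;q)_n/(αβ;q)_n] · Σ_{n,1} = H_n(z;α^{−1},β^{−1},γ^{−1},q^{−1}) and [α^{n}(γβ;q)_n/(γ^{n}(αβ;q)_n)]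 · Σ_{n,2} = H_n(z;α,β,γ,q). -/
/-- The terminating continuous dual `q`-Hahn polynomial
`H_n(z;a,b,c,q) = ∑_{m=0}^{n} (q^{−n};q)_m (az;q)_m (az^{−1};q)_m /
((q;q)_m (ab;q)_m (ac;q)_m) · q^m`. -/
noncomputable def Hn (n : ℕ) (z a b c q : ℂ) : ℂ :=
  ∑ m ∈ Finset.range (n + 1),
    (qPoch (q ^ (-(n : ℤ))) q m * qPoch (a * z) q m * qPoch (a * z⁻¹) q m) /
      (qPoch q q m * qPoch (a * b) q m * qPoch (a * c) q m) * q ^ m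

lemma qPoch_zero' (a q : ℂ) : qPoch a q 0 = 1 := by simp [qPoch]

lemma qPoch_succ' (a q : ℂ) (m : ℕ) : qPoch a q (m+1) = qPoch a q m * (1 - a * q^m) := by
  simp [qPoch, Finset.prod_range_succ]

lemma qPoch_left (a q : ℂ) (m : ℕ) : qPoch a q (m+1) = (1 - a) * qPoch (a*q) q m := by
  simp only [qPoch, Finset.prod_range_succ']
  rw [mul_comm]
  congr 1
  · simp
  · apply Finset.prod_congr rfl; intros; ring

lemma qPoch_ne_of_le {a q : ℂ} {m n : ℕ} (h : m ≤ n) (hn : qPoch a q n ≠ 0) : qPoch a q m ≠ 0 := by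
  simp only [qPoch, Finset.prod_ne_zero_iff, Finset.mem_range] at *
  intro j hj; exact hn j (by omega)

/-- term of the sum, with `v` in place of `q^{-n}` -/
noncomputable def hterm (z a b c q v : ℂ) (m : ℕ) : ℂ :=
  (qPoch v q m * qPoch (a * z) q m * qPoch (a * z⁻¹) q m) /
      (qPoch q q m * qPoch (a * b) q m * qPoch (a * c) q m) * q ^ m

noncomputable def gterm (z a b c q v : ℂ) : ℕ → ℂ
  | 0 => 0
  | (k+1) => (qPoch v q k * qPoch (a * z) q (k+1) * qPoch (a * z⁻¹) q (k+1)) /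
      (qPoch q q k * qPoch (a * b) q k * qPoch (a * c) q k)

noncomputable def Lterm (z a b c q v : ℂ) (k : ℕ) : ℂ :=
  (1 - a*b/(v*q)) * (1 - a*c/(v*q)) * (hterm z a b c q v k - hterm z a b c q (v*q) k)
  + a^2 * (1 - 1/(v*q)) * (1 - b*c/(v*q*q)) * (hterm z a b c q (v*q*q) k - hterm z a b c q (v*q) k)
  + (1 - a*z)*(1 - a*z⁻¹) * hterm z a b c q (v*q) k

lemma Lterm_eq (z a b c q v : ℂ) (hz : z ≠ 0) (hq : q ≠ 0) (hv : v ≠ 0) (k : ℕ)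
    (h1 : qPoch q q k ≠ 0) (h2 : qPoch (a*b) q k ≠ 0) (h3 : qPoch (a*c) q k ≠ 0) :
    Lterm z a b c q v k = gterm z a b c q (v*q) (k+1) - gterm z a b c q (v*q) k := by
  rcases k with _ | _ | k
  · simp [Lterm, gterm, hterm, qPoch_zero', qPoch_succ']
  · simp only [Lterm, gterm, hterm, qPoch_zero', qPoch_succ', zero_add, pow_zero, pow_one, one_mul, mul_one, ne_eq] at *
    generalize hw : z⁻¹ = w
    have hzw : z * w = 1 := by rw [← hw]; field_simp
    field_simp
    have : w = z⁻¹ := hw.symm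
    subst this
    field_simp
    ring
  · have e1 : qPoch v q (k+2) = (1-v)*(1-v*q)*qPoch (v*q*q) q k := by
      rw [qPoch_left, qPoch_left]; ring
    have e2 : qPoch (v*q) q (k+2) = (1-v*q)*(qPoch (v*q*q) q k * (1 - v*q*q*q^k)) := by
      rw [qPoch_left, qPoch_succ']
    have e3 : qPoch (v*q) q (k+1) = (1-v*q)*(qPoch (v*q*q) q k) := by
      rw [qPoch_left]
    have e4 : qPoch (v*q*q) q (k+2) = qPoch (v*q*q) q k * (1 - v*q*q*q^k) * (1 - v*q*q*q^(k+1)) := by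
      rw [qPoch_succ', qPoch_succ']
    simp only [Lterm, gterm, hterm]
    rw [show k+1+1 = k+2 from rfl] at *
    rw [e1, e2, e3, e4]
    simp only [qPoch_succ' _ _ (k+2)]
    rw [show k+2 = (k+1)+1 from rfl] at *
    rw [qPoch_succ' _ _ (k+1)] at h1 h2 h3
    simp only [qPoch_succ' _ _ (k+1)]
    generalize qPoch (v*q*q) q k = W
    generalize qPoch (a*z) q (k+1) = X at *
    generalize qPoch (a*z⁻¹) q (k+1) = Y at *
    generalize qPoch q q (k+1) = D1 at *
    generalize qPoch (a*b) q (k+1) = D2 at *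
    generalize qPoch (a*c) q (k+1) = D3 at *
    simp only [pow_succ] at *
    have hK : q^k ≠ 0 := pow_ne_zero _ hq
    generalize q^k = K at *
    obtain ⟨h1, h1'⟩ := mul_ne_zero_iff.1 h1
    obtain ⟨h2, h2'⟩ := mul_ne_zero_iff.1 h2
    obtain ⟨h3, h3'⟩ := mul_ne_zero_iff.1 h3
    generalize hE1 : 1 - q*(K*q) = E1 at *
    generalize hE2 : 1 - a*b*(K*q) = E2 at *
    generalize hE3 : 1 - a*c*(K*q) = E3 at *
    field_simp
    rw [← hE1, ← hE2, ← hE3]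
    ring

lemma sum_Lterm (z a b c q v : ℂ) (hz : z ≠ 0) (hq : q ≠ 0) (hv : v ≠ 0) (N : ℕ)
    (h1 : qPoch q q N ≠ 0) (h2 : qPoch (a*b) q N ≠ 0) (h3 : qPoch (a*c) q N ≠ 0) :
    ∀ M ≤ N+1, ∑ k ∈ Finset.range M, Lterm z a b c q v k = gterm z a b c q (v*q) M := by
  intro M
  induction M with
  | zero => intro _; simp [gterm]
  | succ M ih =>
    intro h
    rw [Finset.sum_range_succ, ih (by omega), Lterm_eq z a b c q v hz hq hv M
      (qPoch_ne_of_le (by omega) h1) (qPoch_ne_of_le (by omega) h2) (qPoch_ne_of_le (by omega) h3)]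
    ring

lemma qPoch_vanish (q : ℂ) (hq : q ≠ 0) (n k : ℕ) (h : n < k) :
    qPoch (q ^ (-(n:ℤ))) q k = 0 := by
  unfold qPoch
  apply Finset.prod_eq_zero (Finset.mem_range.2 h)
  rw [zpow_neg, zpow_natCast]
  have := pow_ne_zero n hq
  field_simp
  ring

lemma Hn_eq (n N : ℕ) (hN : n ≤ N) (z a b c q : ℂ) (hq : q ≠ 0) :
    Hn n z a b c q = ∑ k ∈ Finset.range (N+1), hterm z a b c q (q ^ (-(n:ℤ))) k := by
  unfold Hn
  change ∑ k ∈ Finset.range (n+1), hterm z a b c q (q ^ (-(n:ℤ))) k = _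
  apply Finset.sum_subset
  · intro x; simp only [Finset.mem_range]; omega
  · intro x _ hx
    simp only [Finset.mem_range] at hx
    rw [hterm, qPoch_vanish q hq n x (by omega)]; simp

lemma Hn_rec (n : ℕ) (z a b c q : ℂ) (hz : z ≠ 0) (hq : q ≠ 0)
    (h1 : qPoch q q (n+2) ≠ 0) (h2 : qPoch (a*b) q (n+2) ≠ 0) (h3 : qPoch (a*c) q (n+2) ≠ 0) :
    (1 - a*b*q^(n+1)) * (1 - a*c*q^(n+1)) * (Hn (n+2) z a b c q - Hn (n+1) z a b c q)
    + a^2 * (1 - q^(n+1)) * (1 - b*c*q^n) * (Hn n z a b c q - Hn (n+1) z a b c q)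
    + (1 - a*z)*(1 - a*z⁻¹) * Hn (n+1) z a b c q = 0 := by
  have hqn := pow_ne_zero n hq
  have hv : q ^ (-((n+2 : ℕ):ℤ)) ≠ 0 := zpow_ne_zero _ hq
  have key := sum_Lterm z a b c q _ hz hq hv (n+2) h1 h2 h3 (n+3) le_rfl
  have f1 : q ^ (-((n+2 : ℕ):ℤ)) * q = q ^ (-((n+1 : ℕ):ℤ)) := by
    rw [← zpow_add_one₀ hq]; congr 1 <;> omega
  have f2 : q ^ (-((n+1 : ℕ):ℤ)) * q = q ^ (-((n : ℕ):ℤ)) := by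
    rw [← zpow_add_one₀ hq]; congr 1 <;> omega
  have g1 : ∀ x, x / q ^ (-((n+1 : ℕ):ℤ)) = x * q^(n+1) := by
    intro x; rw [zpow_neg, zpow_natCast, div_inv_eq_mul]
  have g2 : ∀ x, x / q ^ (-((n : ℕ):ℤ)) = x * q^n := by
    intro x; rw [zpow_neg, zpow_natCast, div_inv_eq_mul]
  rw [Hn_eq (n+2) (n+2) le_rfl _ _ _ _ _ hq, Hn_eq (n+1) (n+2) (by omega) _ _ _ _ _ hq,
    Hn_eq n (n+2) (by omega) _ _ _ _ _ hq]
  simp only [Lterm, f1, f2, g1, g2, one_mul] at key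
  have g0 : gterm z a b c q (q ^ (-((n+1 : ℕ):ℤ))) (n+3) = 0 := by
    simp only [gterm]
    rw [qPoch_vanish q hq (n+1) (n+2) (by omega)]; simp
  rw [g0] at key
  rw [← key]
  simp only [Finset.sum_add_distrib, ← Finset.mul_sum, Finset.sum_sub_distrib]

/-- `(ab)_n (ac)_n a^{-n} H_n` -/
noncomputable def Gn (n : ℕ) (z a b c q : ℂ) : ℂ :=
  qPoch (a*b) q n * qPoch (a*c) q n / a^n * Hn n z a b c q

lemma Gn_rec (n : ℕ) (z a b c q : ℂ) (hz : z ≠ 0) (hq : q ≠ 0) (ha : a ≠ 0)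
    (h1 : qPoch q q (n+2) ≠ 0) (h2 : qPoch (a*b) q (n+2) ≠ 0) (h3 : qPoch (a*c) q (n+2) ≠ 0) :
    Gn (n+2) z a b c q =
      (z + z⁻¹ - (a+b+c)*q^(n+1) + a*b*c*(q^(2*n+2) - q^n + q^(2*n+1))) * Gn (n+1) z a b c q
      - (1 - q^(n+1)) * (1 - b*c*q^n) * (1 - a*b*q^n) * (1 - a*c*q^n) * Gn n z a b c q := by
  have key := Hn_rec n z a b c q hz hq h1 h2 h3
  simp only [Gn, qPoch_succ', show n+2 = (n+1)+1 from rfl] at *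
  generalize Hn (n+1+1) z a b c q = U at *
  generalize Hn (n+1) z a b c q = V at *
  generalize Hn n z a b c q = W at *
  have hzz : z * z⁻¹ = 1 := by field_simp
  generalize z⁻¹ = w at *
  have e : (1 - a*b*q^(n+1)) * (1 - a*c*q^(n+1)) * U = (1 - a*b*q^(n+1)) * (1 - a*c*q^(n+1)) * V
    - a^2 * (1 - q^(n+1)) * (1 - b*c*q^n) * (W - V) - (1 + a^2 - a*z - a*w) * V := by
    linear_combination key - a^2*hzz*V
  have : qPoch (a * b) q n * (1 - a * b * q ^ n) * (1 - a * b * q ^ (n + 1)) *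
          (qPoch (a * c) q n * (1 - a * c * q ^ n) * (1 - a * c * q ^ (n + 1))) /
        a ^ (n + 1 + 1) * U = qPoch (a * b) q n * (1 - a * b * q ^ n) * 
          (qPoch (a * c) q n * (1 - a * c * q ^ n)) /
        a ^ (n + 1 + 1) * ((1 - a*b*q^(n+1)) * (1 - a*c*q^(n+1)) * U) := by ring
  rw [this, e]
  field_simp
  ring

lemma Gn_symm (z a b c q : ℂ) (hz : z ≠ 0) (hq : q ≠ 0) (ha : a ≠ 0) (hc : c ≠ 0) (n : ℕ) :
    qPoch q q n ≠ 0 → qPoch (a*b) q n ≠ 0 → qPoch (a*c) q n ≠ 0 → qPoch (c*b) q n ≠ 0 →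
    Gn n z a b c q = Gn n z c b a q := by
  induction n using Nat.strong_induction_on with
  | _ n ih =>
    intro h1 h2 h3 h4
    rcases n with _ | _ | n
    · simp [Gn, Hn, qPoch_zero']
    · simp only [Gn, Hn, Finset.sum_range_succ, Finset.sum_range_zero, qPoch_zero', qPoch_succ',
        zero_add, pow_zero, pow_one, one_mul, mul_one, Nat.cast_one, zpow_neg, zpow_one,
        mul_comm c a, div_one] at *
      generalize hE1 : 1 - q = E1 at *
      generalize hE2 : 1 - a*b = E2 at *
      generalize hE3 : 1 - a*c = E3 at *
      generalize hE4 : 1 - c*b = E4 at *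
      field_simp
      rw [← hE1, ← hE2, ← hE3, ← hE4]
      ring
    · have h3' : qPoch (c*a) q (n+2) ≠ 0 := by rwa [mul_comm c a]
      rw [Gn_rec n z a b c q hz hq ha h1 h2 h3, Gn_rec n z c b a q hz hq hc h1 h4 h3',
        ih (n+1) (by omega) (qPoch_ne_of_le (by omega) h1) (qPoch_ne_of_le (by omega) h2)
          (qPoch_ne_of_le (by omega) h3) (qPoch_ne_of_le (by omega) h4),
        ih n (by omega) (qPoch_ne_of_le (by omega) h1) (qPoch_ne_of_le (by omega) h2)
          (qPoch_ne_of_le (by omega) h3) (qPoch_ne_of_le (by omega) h4)]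
      ring

lemma Hn_symm (z a b c q : ℂ) (hz : z ≠ 0) (hq : q ≠ 0) (ha : a ≠ 0) (hc : c ≠ 0) (n : ℕ)
    (h1 : qPoch q q n ≠ 0) (h2 : qPoch (a*b) q n ≠ 0) (h3 : qPoch (a*c) q n ≠ 0)
    (h4 : qPoch (c*b) q n ≠ 0) :
    a^n * qPoch (c*b) q n / (c^n * qPoch (a*b) q n) * Hn n z c b a q = Hn n z a b c q := by
  have := Gn_symm z a b c q hz hq ha hc n h1 h2 h3 h4
  simp only [Gn, mul_comm c a] at this
  field_simp at this ⊢
  rw [← this]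

lemma qPoch_inv (x q : ℂ) (hx : x ≠ 0) (hq : q ≠ 0) (m : ℕ) :
    qPoch x⁻¹ q⁻¹ m = (-1)^m * x⁻¹^m * (∏ j ∈ Finset.range m, q⁻¹^j) * qPoch x q m := by
  unfold qPoch
  have : ∀ s t : ℂ, s^m = ∏ j ∈ Finset.range m, s := by simp
  rw [this (-1) 0, this x⁻¹ 0, ← Finset.prod_mul_distrib, ← Finset.prod_mul_distrib,
    ← Finset.prod_mul_distrib]
  apply Finset.prod_congr rfl
  intro j _
  have := pow_ne_zero j hq
  simp only [inv_pow]
  field_simp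
  ring

lemma qPoch_rev_s8 (x q : ℂ) (hq : q ≠ 0) (m : ℕ) :
    qPoch (q ^ (1 - (m:ℤ)) * x) q m = qPoch x q⁻¹ m := by
  unfold qPoch
  rw [← Finset.prod_range_reflect]
  apply Finset.prod_congr rfl
  intro j hj
  have hj := Finset.mem_range.1 hj
  have : q ^ (1 - (m:ℤ)) * q^(m-1-j) = q⁻¹^j := by
    rw [← zpow_natCast, ← zpow_natCast, inv_zpow', ← zpow_add₀ hq]
    congr 1 <;> omega
  rw [← this]; ring

/-- Equation (5.35) in the proof of Theorem 5.3 of the paper: the sums `Σ_{n,1}`, `Σ_{n,2}`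
are, up to explicit prefactors, the continuous dual `q`-Hahn polynomials
`H_n(z;α^{−1},β^{−1},γ^{−1},q^{−1})` and `H_n(z;α,β,γ,q)`. -/
theorem stmt8 (n : ℕ) (hn : 1 ≤ n) (q α β γ z : ℂ)
    (hq : q ≠ 0) (hα : α ≠ 0) (hβ : β ≠ 0) (hγ : γ ≠ 0) (hz : z ≠ 0)
    (hq1 : ∀ j : ℕ, 1 ≤ j → j ≤ n → q ^ j ≠ 1)
    (hαβ : ∀ i : ℤ, 1 - (n : ℤ) ≤ i → i ≤ (n : ℤ) - 1 → α * β ≠ q ^ i)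
    (hαγ : ∀ i : ℤ, 1 - (n : ℤ) ≤ i → i ≤ (n : ℤ) - 1 → α * γ ≠ q ^ i)
    (hβγ : ∀ i : ℤ, 1 - (n : ℤ) ≤ i → i ≤ (n : ℤ) - 1 → β * γ ≠ q ^ i) :
    qPoch (γ * β) q n / qPoch (α * β) q n *
        (∑ m ∈ Finset.range (n + 1),
          q ^ (-(m : ℤ)) *
            (qPoch (q ^ ((n : ℤ) + 1 - (m : ℤ))) q m *
              qPoch (q ^ (1 - (m : ℤ)) / (γ * z)) q m *
              qPoch (q ^ (1 - (m : ℤ)) * z / γ) q m) /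
            (qPoch (q ^ (-(m : ℤ))) q m * qPoch (q ^ (1 - (m : ℤ)) / (β * γ)) q m *
              qPoch (q ^ (1 - (m : ℤ)) / (α * γ)) q m))
      = Hn n z α⁻¹ β⁻¹ γ⁻¹ q⁻¹
    ∧ α ^ n * qPoch (γ * β) q n / (γ ^ n * qPoch (α * β) q n) *
        (∑ m ∈ Finset.range (n + 1),
          α ^ (-(m : ℤ)) * β ^ (-(m : ℤ)) * q ^ (-((m : ℤ) * (n : ℤ))) *
            (qPoch (q ^ ((n : ℤ) + 1 - (m : ℤ))) q m *
              qPoch (q ^ (1 - (m : ℤ)) / (γ * z)) q m *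
              qPoch (q ^ (1 - (m : ℤ)) * z / γ) q m) /
            (qPoch (q ^ (-(m : ℤ))) q m * qPoch (q ^ (1 - (m : ℤ)) / (β * γ)) q m *
              qPoch (q ^ (1 - (m : ℤ)) / (α * γ)) q m))
      = Hn n z α β γ q := by
  have hp : q⁻¹ ≠ 0 := inv_ne_zero hq
  have k1 : qPoch q q n ≠ 0 := by
    simp only [qPoch, Finset.prod_ne_zero_iff, Finset.mem_range]
    intro j hj h
    apply hq1 (j+1) (by omega) (by omega)
    linear_combination -h
  have gen : ∀ x : ℂ, (∀ i : ℤ, 1 - (n : ℤ) ≤ i → i ≤ (n : ℤ) - 1 → x ≠ q ^ i) →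
      qPoch x q n ≠ 0 := by
    intro x hx
    simp only [qPoch, Finset.prod_ne_zero_iff, Finset.mem_range]
    intro j hj h
    apply hx (-(j:ℤ)) (by omega) (by omega)
    have := pow_ne_zero j hq
    rw [zpow_neg, zpow_natCast]
    field_simp
    linear_combination -h
  have kab := gen _ hαβ
  have kac := gen _ hαγ
  have kbc := gen _ hβγ
  rw [mul_comm β γ] at kbc
  have hP : ∀ m : ℕ, (∏ j ∈ Finset.range m, q⁻¹^j) ≠ 0 := fun m =>
    Finset.prod_ne_zero_iff.2 fun j _ => pow_ne_zero _ hp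
  have inv_ne : ∀ x : ℂ, x ≠ 0 → ∀ m, qPoch x q m ≠ 0 → qPoch x⁻¹ q⁻¹ m ≠ 0 := by
    intro x hx m h
    rw [qPoch_inv x q hx hq]
    have := hP m
    have : (-1:ℂ)^m ≠ 0 := pow_ne_zero _ (by norm_num)
    have : x⁻¹^m ≠ 0 := pow_ne_zero _ (inv_ne_zero hx)
    simp_all
  -- base `q⁻¹` forms of the Pochhammer symbols
  have r1 : ∀ m : ℕ, qPoch (q ^ ((n : ℤ) + 1 - (m : ℤ))) q m = qPoch (q⁻¹ ^ (-(n:ℤ))) q⁻¹ m := by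
    intro m
    rw [← qPoch_rev_s8 _ q hq, inv_zpow', ← zpow_add₀ hq]
    congr 2; ring
  have r2 : ∀ m : ℕ, qPoch (q ^ (1 - (m : ℤ)) / (γ * z)) q m = qPoch (γ⁻¹ * z⁻¹) q⁻¹ m := by
    intro m
    rw [← qPoch_rev_s8 _ q hq, div_eq_mul_inv, mul_inv]
  have r3 : ∀ m : ℕ, qPoch (q ^ (1 - (m : ℤ)) * z / γ) q m = qPoch (γ⁻¹ * z) q⁻¹ m := by
    intro m
    rw [← qPoch_rev_s8 _ q hq]
    congr 1; ring
  have r4 : ∀ m : ℕ, qPoch (q ^ (-(m : ℤ))) q m = qPoch q⁻¹ q⁻¹ m := by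
    intro m
    rw [← qPoch_rev_s8 _ q hq, ← zpow_neg_one, ← zpow_add₀ hq]
    congr 2; ring
  have r5 : ∀ m : ℕ, qPoch (q ^ (1 - (m : ℤ)) / (β * γ)) q m = qPoch (γ⁻¹ * β⁻¹) q⁻¹ m := by
    intro m
    rw [← qPoch_rev_s8 _ q hq, div_eq_mul_inv, mul_inv, mul_comm β⁻¹]
  have r6 : ∀ m : ℕ, qPoch (q ^ (1 - (m : ℤ)) / (α * γ)) q m = qPoch (γ⁻¹ * α⁻¹) q⁻¹ m := by
    intro m
    rw [← qPoch_rev_s8 _ q hq, div_eq_mul_inv, mul_inv, mul_comm α⁻¹]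
  simp only [r1, r2, r3, r4, r5, r6]
  constructor
  · have h := Hn_symm z α⁻¹ β⁻¹ γ⁻¹ q⁻¹ hz hp (inv_ne_zero hα) (inv_ne_zero hγ) n
      (inv_ne q hq n k1)
      (by rw [← mul_inv]; exact inv_ne _ (mul_ne_zero hα hβ) n kab)
      (by rw [← mul_inv]; exact inv_ne _ (mul_ne_zero hα hγ) n kac)
      (by rw [← mul_inv]; exact inv_ne _ (mul_ne_zero hγ hβ) n kbc)
    rw [← h, ← mul_inv γ β, ← mul_inv α β, qPoch_inv _ q (mul_ne_zero hγ hβ) hq,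
      qPoch_inv _ q (mul_ne_zero hα hβ) hq]
    congr 1
    · have := hP n
      generalize (∏ j ∈ Finset.range n, q⁻¹^j) = P at *
      have : (-1:ℂ)^n ≠ 0 := pow_ne_zero _ (by norm_num)
      generalize (-1:ℂ)^n = s at *
      simp only [mul_inv, mul_pow, inv_pow]
      field_simp
    · unfold Hn
      apply Finset.sum_congr rfl
      intro m _
      rw [zpow_neg, zpow_natCast, inv_pow]
      ring
  · rw [← Hn_symm z α β γ q hz hq hα hγ n k1 kab kac kbc]
    congr 1
    unfold Hn
    apply Finset.sum_congr rfl
    intro m hm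
    have hm : m ≤ n := by have := Finset.mem_range.1 hm; omega
    have w1 : q⁻¹ ^ (-(n:ℤ)) = (q ^ (-(n:ℤ)))⁻¹ := by rw [inv_zpow]
    have w2 : γ⁻¹ * z = (γ * z⁻¹)⁻¹ := by rw [mul_inv, inv_inv]
    have hz' : z⁻¹ ≠ 0 := inv_ne_zero hz
    rw [w1, w2, ← mul_inv, ← mul_inv, ← mul_inv, qPoch_inv _ q (zpow_ne_zero _ hq) hq,
      qPoch_inv _ q (mul_ne_zero hγ hz) hq, qPoch_inv _ q (mul_ne_zero hγ hz') hq,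
      qPoch_inv q q hq hq, qPoch_inv _ q (mul_ne_zero hγ hβ) hq,
      qPoch_inv _ q (mul_ne_zero hγ hα) hq]
    have d1 := qPoch_ne_of_le hm k1
    have d2 := qPoch_ne_of_le hm kbc
    have d3 := qPoch_ne_of_le hm kac
    rw [mul_comm α γ] at d3
    have := hP m
    generalize (∏ j ∈ Finset.range m, q⁻¹^j) = P at *
    have : (-1:ℂ)^m ≠ 0 := pow_ne_zero _ (by norm_num)
    generalize (-1:ℂ)^m = s at *
    have e : (q ^ (-(n:ℤ)))⁻¹ ^ m = q^(m*n) := by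
      rw [zpow_neg, inv_inv, zpow_natCast, ← pow_mul, mul_comm]
    have e' : q ^ (-((m:ℤ) * (n:ℤ))) = (q^(m*n))⁻¹ := by
      rw [zpow_neg]; norm_cast
    rw [e, e']
    have := pow_ne_zero (m*n) hq
    generalize q^(m*n) = Q at *
    generalize qPoch (q ^ (-(n:ℤ))) q m = A1
    generalize qPoch (γ * z) q m = A2
    generalize qPoch (γ * z⁻¹) q m = A3
    generalize qPoch q q m = A4 at *
    generalize qPoch (γ * β) q m = A5 at *
    generalize qPoch (γ * α) q m = A6 at *
    simp only [zpow_neg, zpow_natCast, mul_inv, mul_pow, inv_pow, inv_inv]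
    field_simp
end
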